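/- For n = m = 3, there is no deterministic matching mechanism that is simultaneously two-sided strategy-proof, non-wasteful, and anonymous. -/

import Mathlib

/-!
A deterministic non-wasteful mechanism assigns to each profile one of the six perfect matchings.
Strategy-proofness relates the outcomes at two profiles that differ in one agent's report: each of
the two reported orders ranks the partner obtained by reporting it at least as high as the partner
obtained by reporting the other. Anonymity relates the outcomes at two profiles that differ by a
renaming. Hence a set of matchings still possible at one profile restricts the set of matchings
possible at a neighbouring one.

Fix the profile `root`, at which all students have the same preferences, and assume one of the six
matchings as its outcome. Following a suitable path of unilateral changes and renamings, and
propagating the sets of possible matchings along it, leaves some profile with no possible matching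
at all. The paths are listed in `refutation`. That propagation preserves the true outcome is
`Domains.Sound.propagate`; that each path ends in an empty set is the finite computation
`refutation_contradictory`, evaluated by the kernel; together they give `not_admissible`. The
theorem follows because an outcome matrix is a permutation matrix (`exists_perm`), and for such
matrices the stochastic-dominance form of strategy-proofness is the comparison of partners'
ranks (`rank_le_of_sum_le`).
-/

open Finset

/-- A preference profile: each student `s` has a ranking `p.1 s : Equiv.Perm (Fin m)`
(where `p.1 s c` is the rank student `s` gives to school `c`, lower rank = more preferred),
and each school `c` has a ranking `p.2 c` of the students (lower rank = more preferred). -/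
abbrev Profile (n m : ℕ) :=
  (Fin n → Equiv.Perm (Fin m)) × (Fin m → Equiv.Perm (Fin n))

/-- A randomized matching: nonnegative entries, and (accounting for the implicit `∅`
row/column each summing to one) every row and column sums to at most one. -/
def IsRandMatching {n m : ℕ} (r : Fin n → Fin m → ℝ) : Prop :=
  (∀ s c, 0 ≤ r s c) ∧ (∀ s, ∑ c, r s c ≤ 1) ∧ (∀ c, ∑ s, r s c ≤ 1)

/-- Stability violation of a randomized matching `r` at profile `p`. -/
def violation {n m : ℕ} (p : Profile n m) (r : Fin n → Fin m → ℝ) : ℝ :=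
  ∑ s, ∑ c,
    max (1 - r s c
      - ∑ c' ∈ univ.filter (fun c' => p.1 s c' < p.1 s c), r s c'
      - ∑ s' ∈ univ.filter (fun s' => p.2 c s' < p.2 c s), r s' c) 0

/-- Two-sided strategy-proofness of a randomized matching mechanism. -/
def TwoSidedSP {n m : ℕ} (g : Profile n m → Fin n → Fin m → ℝ) : Prop :=
  (∀ p : Profile n m, ∀ s : Fin n, ∀ q : Equiv.Perm (Fin m), ∀ c : Fin m,
    ∑ c' ∈ univ.filter (fun c' => p.1 s c' ≤ p.1 s c),
        g (Function.update p.1 s q, p.2) s c'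
      ≤ ∑ c' ∈ univ.filter (fun c' => p.1 s c' ≤ p.1 s c), g p s c') ∧
  (∀ p : Profile n m, ∀ c : Fin m, ∀ q : Equiv.Perm (Fin n), ∀ s : Fin n,
    ∑ s' ∈ univ.filter (fun s' => p.2 c s' ≤ p.2 c s),
        g (p.1, Function.update p.2 c q) s' c
      ≤ ∑ s' ∈ univ.filter (fun s' => p.2 c s' ≤ p.2 c s), g p s' c)

/-- The relabelled profile `≻^π`: student `πS s` gets student `s`'s old preference with
schools renamed by `πC`, and school `πC c` gets school `c`'s old preference with students
renamed by `πS`. -/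
def relabel {n m : ℕ} (πS : Equiv.Perm (Fin n)) (πC : Equiv.Perm (Fin m))
    (p : Profile n m) : Profile n m :=
  (fun i => πC.symm.trans (p.1 (πS.symm i)),
   fun j => πS.symm.trans (p.2 (πC.symm j)))

/-- Anonymity of a mechanism. -/
def Anonymous {n m : ℕ} (g : Profile n m → Fin n → Fin m → ℝ) : Prop :=
  ∀ p : Profile n m, ∀ πS : Equiv.Perm (Fin n), ∀ πC : Equiv.Perm (Fin m), ∀ s c,
    g p s c = g (relabel πS πC p) (πS s) (πC c)

/-- A deterministic matching output: 0–1 entries with at most one 1 in each row and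
each column. -/
def IsDetOutput {n m : ℕ} (r : Fin n → Fin m → ℝ) : Prop :=
  (∀ s c, r s c = 0 ∨ r s c = 1) ∧ (∀ s, ∑ c, r s c ≤ 1) ∧ (∀ c, ∑ s, r s c ≤ 1)

namespace ThreeByThree

open Equiv

/-! ### Permutations of three objects and markets -/

/-- The six permutations of `Fin 3`. They serve as preference orders (the sequence of values is
the ranking from best to worst), as perfect matchings (student `i` goes to school `σ i`) and as
renamings of the agents on one side. -/
inductive S3
  | a | b | c | d | e | f
  deriving DecidableEq

/-- The permutation named by each letter; in one-line notation
`a = 012`, `b = 021`, `c = 102`, `d = 120`, `e = 201`, `f = 210`. -/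
def S3.perm : S3 → Perm (Fin 3)
  | .a => ⟨![0, 1, 2], ![0, 1, 2], by decide, by decide⟩
  | .b => ⟨![0, 2, 1], ![0, 2, 1], by decide, by decide⟩
  | .c => ⟨![1, 0, 2], ![1, 0, 2], by decide, by decide⟩
  | .d => ⟨![1, 2, 0], ![2, 0, 1], by decide, by decide⟩
  | .e => ⟨![2, 0, 1], ![1, 2, 0], by decide, by decide⟩
  | .f => ⟨![2, 1, 0], ![2, 1, 0], by decide, by decide⟩

/-- The letter naming a permutation. -/
def S3.ofPerm (σ : Perm (Fin 3)) : S3 :=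
  if σ 0 = 0 then (if σ 1 = 1 then .a else .b)
  else if σ 0 = 1 then (if σ 1 = 0 then .c else .d)
  else (if σ 1 = 0 then .e else .f)

lemma S3.perm_ofPerm (σ : Perm (Fin 3)) : (S3.ofPerm σ).perm = σ := by
  revert σ; decide

lemma S3.ofPerm_perm (k : S3) : S3.ofPerm k.perm = k := by
  cases k <;> decide

/-- A preference profile written as six orders, best to worst: those of students `0, 1, 2`
followed by those of schools `0, 1, 2`. -/
structure Market where
  s0 : S3
  s1 : S3
  s2 : S3
  c0 : S3
  c1 : S3
  c2 : S3

/-- Boolean equality of permutation names, by pattern matching so that it evaluates quickly. -/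
def S3.beq : S3 → S3 → Bool
  | .a, .a | .b, .b | .c, .c | .d, .d | .e, .e | .f, .f => true
  | _, _ => false

lemma S3.beq_iff (k l : S3) : k.beq l = true ↔ k = l := by
  cases k <;> cases l <;> decide

namespace Market

/-- Boolean equality of markets. -/
def beq (P Q : Market) : Bool :=
  P.s0.beq Q.s0 && P.s1.beq Q.s1 && P.s2.beq Q.s2 &&
    P.c0.beq Q.c0 && P.c1.beq Q.c1 && P.c2.beq Q.c2

lemma beq_iff (P Q : Market) : P.beq Q = true ↔ P = Q := by
  cases P; cases Q; simp [beq, S3.beq_iff, and_assoc]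

/-- The order reported by each student. -/
def stu (P : Market) : Fin 3 → S3 := ![P.s0, P.s1, P.s2]

/-- The order reported by each school. -/
def sch (P : Market) : Fin 3 → S3 := ![P.c0, P.c1, P.c2]

/-- The market with given student orders `u` and school orders `v`. -/
def ofFun (u v : Fin 3 → S3) : Market := ⟨u 0, u 1, u 2, v 0, v 1, v 2⟩

lemma stu_ofFun (u v : Fin 3 → S3) : (ofFun u v).stu = u := by
  funext i; fin_cases i <;> rfl

lemma sch_ofFun (u v : Fin 3 → S3) : (ofFun u v).sch = v := by
  funext i; fin_cases i <;> rfl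

lemma ofFun_stu_sch (P : Market) : ofFun P.stu P.sch = P := rfl

/-- The corresponding `Profile`. A `Profile` stores the rank of each alternative, which is the
inverse of the best-to-worst listing. -/
def toProfile (P : Market) : Profile 3 3 :=
  (fun s => (P.stu s).perm.symm, fun c => (P.sch c).perm.symm)

/-- Student `s` reports `q` instead. -/
def setStu (P : Market) (s : Fin 3) (q : S3) : Market :=
  ofFun (Function.update P.stu s q) P.sch

/-- School `c` reports `q` instead. -/
def setSch (P : Market) (c : Fin 3) (q : S3) : Market :=
  ofFun P.stu (Function.update P.sch c q)

/-- The market with students renamed by `x` and schools by `y`. -/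
def ren (P : Market) (x y : S3) : Market :=
  ofFun (fun i => S3.ofPerm (y.perm * (P.stu (x.perm.symm i)).perm))
    (fun j => S3.ofPerm (x.perm * (P.sch (y.perm.symm j)).perm))

lemma setStu_setStu (P : Market) (s : Fin 3) (q : S3) :
    (P.setStu s q).setStu s (P.stu s) = P := by
  simp [setStu, stu_ofFun, sch_ofFun, ofFun_stu_sch]

lemma setSch_setSch (P : Market) (c : Fin 3) (q : S3) :
    (P.setSch c q).setSch c (P.sch c) = P := by
  simp [setSch, stu_ofFun, sch_ofFun, ofFun_stu_sch]

lemma toProfile_setStu (P : Market) (s : Fin 3) (q : S3) :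
    (P.setStu s q).toProfile
      = (Function.update P.toProfile.1 s q.perm.symm, P.toProfile.2) := by
  refine Prod.ext (funext fun i => ?_) ?_
  · by_cases h : i = s
    · subst h; simp [toProfile, setStu, stu_ofFun]
    · simp [toProfile, setStu, stu_ofFun, h]
  · simp [toProfile, setStu, sch_ofFun]

lemma toProfile_setSch (P : Market) (c : Fin 3) (q : S3) :
    (P.setSch c q).toProfile
      = (P.toProfile.1, Function.update P.toProfile.2 c q.perm.symm) := by
  refine Prod.ext ?_ (funext fun i => ?_)
  · simp [toProfile, setSch, stu_ofFun]
  · by_cases h : i = c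
    · subst h; simp [toProfile, setSch, sch_ofFun]
    · simp [toProfile, setSch, sch_ofFun, h]

lemma toProfile_ren (P : Market) (x y : S3) :
    (P.ren x y).toProfile = relabel x.perm y.perm P.toProfile := by
  refine Prod.ext (funext fun i => ?_) (funext fun i => ?_) <;>
  · ext j
    simp [toProfile, ren, relabel, stu_ofFun, sch_ofFun, S3.perm_ofPerm, ← Perm.inv_def]

end Market

/-! ### Propagation of strategy-proofness and anonymity -/

/-- A link between the outcomes of two markets: in `student P s q` student `s` changes the
report in `P` to `q`; `school P c q` is the same for a school; `rename P x y` renames the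
students by `x` and the schools by `y`. -/
inductive Step
  | student (P : Market) (s : Fin 3) (q : S3)
  | school (P : Market) (c : Fin 3) (q : S3)
  | rename (P : Market) (x y : S3)

namespace Step

/-- The market a step starts from. -/
def source : Step → Market
  | student P _ _ => P
  | school P _ _ => P
  | rename P _ _ => P

/-- The market a step leads to. -/
def target : Step → Market
  | student P s q => P.setStu s q
  | school P c q => P.setSch c q
  | rename P x y => P.ren x y

/-- Whether outcome `m` at the source is compatible with outcome `m'` at the target. An agent
whose report changes from `k` to `q` must weakly prefer its old partner according to `k` and its
new partner according to `q`; a renaming transports the outcome. -/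
def ok : Step → S3 → S3 → Bool
  | student P s q, m, m' =>
    decide ((P.stu s).perm.symm (m.perm s) ≤ (P.stu s).perm.symm (m'.perm s)) &&
      decide (q.perm.symm (m'.perm s) ≤ q.perm.symm (m.perm s))
  | school P c q, m, m' =>
    decide ((P.sch c).perm.symm (m.perm.symm c) ≤ (P.sch c).perm.symm (m'.perm.symm c)) &&
      decide (q.perm.symm (m'.perm.symm c) ≤ q.perm.symm (m.perm.symm c))
  | rename _ x y, m, m' => decide (S3.ofPerm (y.perm * m.perm * x.perm.symm) = m')

end Step

/-- A mechanism `F` on markets is admissible if its outcomes respect every step. -/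
def Admissible (F : Market → S3) : Prop :=
  ∀ t : Step, t.ok (F t.source) (F t.target) = true

/-- A list of markets with the outcomes not yet excluded there; an earlier entry overrides a
later one, and nothing is excluded at markets that are not listed. -/
abbrev Domains := List (Market × List S3)

/-- The outcomes still possible at `P`. -/
def Domains.get (P : Market) : Domains → List S3
  | [] => [.a, .b, .c, .d, .e, .f]
  | (Q, D) :: st => bif P.beq Q then D else Domains.get P st

lemma Domains.get_cons_self (P : Market) (D : List S3) (st : Domains) :
    Domains.get P ((P, D) :: st) = D := by
  simp [Domains.get, (Market.beq_iff P P).2 rfl]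

lemma Domains.get_cons_of_ne {P Q : Market} (h : P ≠ Q) (D : List S3) (st : Domains) :
    Domains.get P ((Q, D) :: st) = Domains.get P st := by
  have : P.beq Q = false := by
    rw [← Bool.not_eq_true, Market.beq_iff]; exact h
  simp [Domains.get, this]

/-- Exclude at the target of `t` every outcome that is incompatible with all the outcomes
possible at its source. -/
def Domains.propagate (st : Domains) (t : Step) : Domains :=
  (t.target, (st.get t.target).filter fun m' => (st.get t.source).any fun m => t.ok m m') :: st

/-- Whether the latest entry has no possible outcome left. -/
def Domains.contradictory : Domains → Bool
  | (_, []) :: _ => true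
  | _ => false

/-- The outcomes of `F` all lie in the domains. -/
def Domains.Sound (F : Market → S3) (st : Domains) : Prop := ∀ P, F P ∈ st.get P

variable {F : Market → S3}

lemma Domains.sound_singleton (P : Market) : Domains.Sound F [(P, [F P])] := by
  intro Q
  by_cases h : Q = P
  · rw [h, Domains.get_cons_self]
    exact List.mem_singleton_self _
  · rw [Domains.get_cons_of_ne h]
    cases F Q <;> simp [Domains.get]

lemma Domains.Sound.propagate (hF : Admissible F) {st : Domains} (h : st.Sound F) (t : Step) :
    (st.propagate t).Sound F := by
  intro Q
  by_cases hQ : Q = t.target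
  · subst hQ
    simp only [Domains.propagate, Domains.get_cons_self, List.mem_filter, List.any_eq_true]
    exact ⟨h _, _, h _, hF t⟩
  · simpa only [Domains.propagate, Domains.get_cons_of_ne hQ] using h Q

lemma Domains.Sound.foldl (hF : Admissible F) (l : List Step) {st : Domains}
    (h : st.Sound F) : (l.foldl Domains.propagate st).Sound F := by
  induction l generalizing st with
  | nil => exact h
  | cons t l ih => exact ih (h.propagate hF t)

lemma Domains.Sound.not_contradictory {st : Domains} (h : st.Sound F) :
    st.contradictory = false := by
  match st, h with
  | [], _ => rfl
  | (_, _ :: _) :: _, _ => rfl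
  | (P, []) :: _, h => simpa [Domains.get_cons_self] using h P

/-! ### The refutation -/

/-- The market at which the outcome is split into cases: all students rank the schools
`0, 1, 2`, and the schools rank the students `0, 1, 2`, `0, 2, 1` and `2, 1, 0` respectively. -/
def root : Market := ⟨.a, .a, .a, .a, .b, .f⟩

open S3 Step in
/-- For each outcome at `root`, a sequence of steps along which propagation leaves some market
without a possible outcome. -/
def refutation : S3 → List Step
  | a => [
      school ⟨a, a, a, a, b, f⟩ 1 c, school ⟨a, a, a, a, b, f⟩ 1 d,
      school ⟨a, a, a, a, b, f⟩ 1 a, school ⟨a, a, a, a, b, f⟩ 1 f,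
      school ⟨a, a, a, a, b, f⟩ 0 b, school ⟨a, a, a, a, b, f⟩ 2 e,
      student ⟨a, a, a, a, b, f⟩ 2 b, school ⟨a, a, a, a, c, f⟩ 0 e,
      school ⟨a, a, a, b, b, f⟩ 2 d, rename ⟨a, a, a, b, b, d⟩ b a,
      school ⟨a, a, a, a, b, e⟩ 0 c, rename ⟨a, a, a, c, b, e⟩ c a,
      student ⟨a, a, a, a, d, f⟩ 2 c, student ⟨a, a, a, a, f, f⟩ 1 c,
      school ⟨a, a, a, a, f, f⟩ 2 b, rename ⟨a, a, a, a, f, b⟩ e a,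
      student ⟨a, a, a, a, a, f⟩ 1 c, student ⟨a, a, a, a, a, f⟩ 0 b,
      student ⟨a, a, a, a, a, f⟩ 2 c, school ⟨a, a, a, a, a, f⟩ 0 e,
      student ⟨a, a, c, a, a, f⟩ 0 c, rename ⟨c, a, c, a, a, f⟩ a c,
      school ⟨a, a, c, a, d, f⟩ 2 d, school ⟨b, a, a, a, a, f⟩ 0 b,
      student ⟨a, a, a, e, a, f⟩ 1 b, student ⟨b, a, a, b, a, f⟩ 2 b,
      rename ⟨b, a, b, b, a, f⟩ f b, student ⟨a, b, a, e, a, f⟩ 2 b,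
      school ⟨a, c, a, a, a, f⟩ 0 b, school ⟨a, b, b, e, a, f⟩ 0 f,
      school ⟨a, c, a, b, a, f⟩ 1 f, rename ⟨a, c, a, b, f, f⟩ b a,
      school ⟨a, a, c, a, d, d⟩ 0 b, rename ⟨a, a, c, b, d, d⟩ b a,
      school ⟨a, b, b, f, a, f⟩ 2 e, rename ⟨a, b, b, f, a, e⟩ f b,
      student ⟨a, a, b, a, b, f⟩ 0 b, student ⟨b, a, b, a, b, f⟩ 1 b,
      rename ⟨b, b, b, a, b, f⟩ e b, student ⟨a, c, a, a, f, f⟩ 2 c,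
      school ⟨a, c, c, a, f, f⟩ 2 e, student ⟨a, c, c, a, f, e⟩ 0 c,
      rename ⟨c, c, c, a, f, e⟩ c c]
  | b => [
      school ⟨a, a, a, a, b, f⟩ 2 c, student ⟨a, a, a, a, b, f⟩ 1 d,
      student ⟨a, a, a, a, b, f⟩ 0 b, student ⟨a, a, a, a, b, f⟩ 0 c,
      student ⟨a, a, a, a, b, f⟩ 2 d, student ⟨a, a, a, a, b, f⟩ 1 c,
      school ⟨a, a, a, a, b, f⟩ 2 d, school ⟨a, a, a, a, b, f⟩ 0 b,
      school ⟨a, a, a, b, b, f⟩ 1 a, rename ⟨a, a, a, b, a, f⟩ b a,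
      student ⟨a, a, a, b, b, f⟩ 2 c, school ⟨a, d, a, a, b, f⟩ 2 d,
      school ⟨c, a, a, a, b, f⟩ 2 d, student ⟨b, a, a, a, b, f⟩ 1 b,
      student ⟨a, a, a, a, b, c⟩ 0 c, student ⟨a, c, a, a, b, f⟩ 2 c,
      rename ⟨a, c, c, a, b, f⟩ b c, school ⟨c, a, a, a, b, d⟩ 2 c,
      student ⟨c, a, a, a, b, d⟩ 2 c, student ⟨c, a, a, a, b, d⟩ 2 d,
      student ⟨c, a, a, a, b, d⟩ 2 b, school ⟨c, a, c, a, b, d⟩ 1 a,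
      rename ⟨c, a, c, a, a, d⟩ b c, school ⟨c, a, c, a, b, d⟩ 1 c,
      student ⟨c, a, d, a, b, d⟩ 0 a, school ⟨a, a, a, a, b, d⟩ 1 e,
      student ⟨a, a, a, a, b, d⟩ 0 b, student ⟨a, a, a, a, b, d⟩ 2 c,
      student ⟨a, a, a, a, b, d⟩ 2 d, school ⟨c, a, a, a, b, c⟩ 2 b,
      school ⟨a, a, d, a, b, d⟩ 2 f, school ⟨a, a, d, a, b, d⟩ 0 b,
      student ⟨b, a, a, a, b, d⟩ 1 b, school ⟨a, a, d, b, b, d⟩ 1 a,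
      rename ⟨a, a, d, b, a, d⟩ b a, school ⟨c, a, a, a, b, b⟩ 1 c,
      rename ⟨c, a, a, a, c, b⟩ c c, student ⟨c, a, c, a, c, d⟩ 0 a,
      student ⟨a, d, a, a, b, f⟩ 2 d, school ⟨a, a, c, b, b, f⟩ 1 d,
      school ⟨a, a, d, a, b, f⟩ 0 b, school ⟨a, a, a, a, e, d⟩ 0 c,
      student ⟨a, d, d, a, b, f⟩ 0 e, student ⟨c, a, b, a, b, d⟩ 0 a,
      school ⟨a, a, d, b, b, f⟩ 1 a, rename ⟨a, a, d, b, a, f⟩ b a,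
      school ⟨a, a, c, a, b, d⟩ 1 c, school ⟨a, a, c, a, c, d⟩ 0 b,
      student ⟨a, a, c, b, c, d⟩ 0 c, school ⟨a, d, a, a, b, d⟩ 1 f,
      school ⟨a, d, a, a, b, d⟩ 0 c, rename ⟨a, d, a, c, b, d⟩ e d,
      student ⟨a, d, a, a, f, d⟩ 1 c, rename ⟨a, c, a, a, f, d⟩ b a,
      school ⟨a, a, c, b, d, f⟩ 0 e, student ⟨a, a, a, c, e, d⟩ 2 b,
      rename ⟨a, a, b, c, e, d⟩ c b, school ⟨e, d, d, a, b, f⟩ 2 e,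
      school ⟨b, b, a, a, b, f⟩ 0 b, student ⟨b, b, a, b, b, f⟩ 0 a,
      school ⟨a, b, a, b, b, f⟩ 1 a, rename ⟨a, b, a, b, a, f⟩ b a,
      school ⟨a, a, b, a, b, d⟩ 0 c, rename ⟨a, a, b, c, b, d⟩ c b,
      student ⟨a, a, b, a, b, d⟩ 1 b, student ⟨b, b, a, a, b, d⟩ 0 a,
      student ⟨a, b, a, a, b, d⟩ 2 b, student ⟨a, b, b, a, b, d⟩ 0 e,
      rename ⟨e, b, b, a, b, d⟩ c d, student ⟨c, a, c, b, c, d⟩ 2 a,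
      school ⟨c, a, a, b, c, d⟩ 2 a, rename ⟨c, a, a, b, c, a⟩ f a,
      school ⟨a, a, c, e, d, f⟩ 1 f, rename ⟨a, a, c, e, f, f⟩ d a,
      school ⟨a, a, c, e, d, f⟩ 1 a, rename ⟨a, a, c, e, a, f⟩ b c,
      student ⟨c, a, a, a, b, b⟩ 0 d, school ⟨d, a, a, a, b, b⟩ 1 c,
      rename ⟨d, a, a, a, c, b⟩ b d, school ⟨c, a, c, b, c, d⟩ 0 a,
      student ⟨c, a, c, a, c, d⟩ 1 b, rename ⟨c, b, c, a, c, d⟩ e f]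
  | c => [
      school ⟨a, a, a, a, b, f⟩ 1 a, school ⟨a, a, a, a, b, f⟩ 1 e,
      student ⟨a, a, a, a, b, f⟩ 2 c, school ⟨a, a, a, a, b, f⟩ 2 d,
      student ⟨a, a, a, a, a, f⟩ 0 c, school ⟨a, a, a, a, a, f⟩ 0 b,
      rename ⟨a, a, a, b, a, f⟩ b a, student ⟨a, a, c, a, b, f⟩ 1 c,
      student ⟨c, a, a, a, a, f⟩ 2 b, student ⟨a, a, a, a, b, d⟩ 0 c,
      rename ⟨c, a, a, a, b, d⟩ b c, student ⟨a, c, c, a, b, f⟩ 1 d,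
      student ⟨a, c, c, a, b, f⟩ 2 d, school ⟨a, c, c, a, b, f⟩ 1 d,
      school ⟨a, d, c, a, b, f⟩ 1 e, school ⟨a, c, c, a, d, f⟩ 2 b,
      school ⟨a, c, d, a, b, f⟩ 1 a, rename ⟨a, c, d, a, a, f⟩ a c,
      student ⟨a, d, c, a, e, f⟩ 1 a, rename ⟨a, a, c, a, e, f⟩ d c,
      student ⟨a, c, c, a, d, b⟩ 0 d, student ⟨a, c, c, a, d, b⟩ 0 c,
      rename ⟨c, c, c, a, d, b⟩ e c, school ⟨a, a, a, a, e, f⟩ 0 c,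
      student ⟨a, a, a, c, e, f⟩ 1 b, student ⟨a, b, a, c, e, f⟩ 0 b,
      rename ⟨b, b, a, c, e, f⟩ f d, student ⟨c, a, b, a, a, f⟩ 0 a,
      school ⟨d, c, c, a, d, b⟩ 0 d, rename ⟨d, c, c, d, d, b⟩ e c,
      school ⟨a, a, b, a, a, f⟩ 0 b, student ⟨a, a, b, a, a, f⟩ 0 b,
      school ⟨b, a, b, a, a, f⟩ 0 e, student ⟨a, a, b, b, a, f⟩ 2 a,
      rename ⟨a, a, a, b, a, f⟩ b a, student ⟨b, a, b, e, a, f⟩ 1 b,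
      rename ⟨b, b, b, e, a, f⟩ d b]
  | d => [
      student ⟨a, a, a, a, b, f⟩ 0 c, school ⟨a, a, a, a, b, f⟩ 0 d,
      school ⟨a, a, a, a, b, f⟩ 2 d, school ⟨a, a, a, a, b, f⟩ 1 a,
      school ⟨a, a, a, a, b, d⟩ 0 b, rename ⟨a, a, a, b, b, d⟩ b a,
      student ⟨a, a, a, a, b, d⟩ 1 c, student ⟨a, c, a, a, b, d⟩ 2 c,
      rename ⟨a, c, c, a, b, d⟩ b c, school ⟨a, a, a, a, a, f⟩ 0 d,
      school ⟨a, a, a, d, a, f⟩ 1 b, school ⟨c, a, a, a, b, f⟩ 0 d,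
      school ⟨a, a, a, d, b, f⟩ 2 e, student ⟨a, a, a, d, b, f⟩ 1 c,
      student ⟨a, c, a, d, b, f⟩ 0 c, student ⟨a, a, a, d, b, e⟩ 2 c,
      rename ⟨a, a, c, d, b, e⟩ c c, student ⟨c, a, a, d, b, f⟩ 1 c]
  | e => [
      student ⟨a, a, a, a, b, f⟩ 0 b, student ⟨a, a, a, a, b, f⟩ 1 b,
      school ⟨a, b, a, a, b, f⟩ 0 e, school ⟨a, b, a, a, b, f⟩ 0 d,
      school ⟨b, a, a, a, b, f⟩ 2 c, student ⟨a, b, a, e, b, f⟩ 0 b,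
      rename ⟨b, b, a, e, b, f⟩ d b, school ⟨b, a, a, a, b, c⟩ 1 f,
      rename ⟨b, a, a, a, f, c⟩ d a, student ⟨b, a, a, a, b, c⟩ 2 b,
      school ⟨a, b, a, d, b, f⟩ 2 b, school ⟨b, a, b, a, b, c⟩ 0 d,
      rename ⟨b, a, b, d, b, c⟩ e b, school ⟨a, b, a, d, b, b⟩ 1 c,
      rename ⟨a, b, a, d, c, b⟩ e a]
  | f => [
      school ⟨a, a, a, a, b, f⟩ 0 d, school ⟨a, a, a, a, b, f⟩ 2 c,
      school ⟨a, a, a, d, b, f⟩ 1 c, rename ⟨a, a, a, d, c, f⟩ e a,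
      school ⟨a, a, a, a, b, c⟩ 0 d, school ⟨a, a, a, d, b, c⟩ 2 f,
      school ⟨a, a, a, d, b, f⟩ 1 c, rename ⟨a, a, a, d, c, f⟩ e a]

lemma refutation_contradictory (m : S3) :
    ((refutation m).foldl Domains.propagate [(root, [m])]).contradictory = true := by
  cases m <;> decide +kernel

lemma not_admissible (F : Market → S3) : ¬ Admissible F := by
  intro hF
  have h := ((Domains.sound_singleton (F := F) root).foldl hF
    (refutation (F root))).not_contradictory
  rw [refutation_contradictory] at h
  exact absurd h (by decide)

/-! ### From matrices to admissible mechanisms -/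

section Matching

variable {r : Fin 3 → Fin 3 → ℝ}

/-- A doubly stochastic 0–1 matrix is a permutation matrix. -/
lemma exists_perm (h01 : ∀ s c, r s c = 0 ∨ r s c = 1) (hrow : ∀ s, ∑ c, r s c = 1)
    (hcol : ∀ c, ∑ s, r s c = 1) :
    ∃ σ : Perm (Fin 3), ∀ s c, r s c = if σ s = c then 1 else 0 := by
  have hex : ∀ s, ∃ c, r s c = 1 := by
    intro s
    by_contra! hne
    have h0 : ∑ c, r s c = 0 := Finset.sum_eq_zero fun c _ => (h01 s c).resolve_right (hne c)
    rw [hrow s] at h0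
    exact one_ne_zero h0
  choose φ hφ using hex
  have hnn : ∀ s c, 0 ≤ r s c := fun s c => by rcases h01 s c with h | h <;> simp [h]
  have hrow0 : ∀ s c, φ s ≠ c → r s c = 0 := by
    intro s c hc
    refine (h01 s c).resolve_right fun h1 => ?_
    have h2 := Finset.add_le_sum (fun i _ => hnn s i) (mem_univ (φ s)) (mem_univ c) hc
    rw [hrow s, hφ s, h1] at h2
    norm_num at h2
  have hinj : Function.Injective φ := by
    intro s t hst
    by_contra hne
    have h2 := Finset.add_le_sum (fun i _ => hnn i (φ s)) (mem_univ s) (mem_univ t) hne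
    rw [hcol, hφ s, hst, hφ t] at h2
    norm_num at h2
  refine ⟨Equiv.ofBijective φ (Finite.injective_iff_bijective.1 hinj), fun s c => ?_⟩
  by_cases h : φ s = c
  · simp [h, ← hφ s]
  · simp [h, hrow0 s c h]

/-- For point masses at `x` and `y`, dominance of the partial sums over the upper contour set of
`y` says that `x` is ranked at least as high as `y`. -/
lemma rank_le_of_sum_le (ρ : Perm (Fin 3)) (x y : Fin 3)
    (h : ∑ z ∈ univ.filter (fun z => ρ z ≤ ρ y), (if y = z then (1 : ℝ) else 0)
      ≤ ∑ z ∈ univ.filter (fun z => ρ z ≤ ρ y), (if x = z then (1 : ℝ) else 0)) :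
    ρ x ≤ ρ y := by
  by_contra hlt
  simp only [Finset.sum_ite_eq, Finset.mem_filter, Finset.mem_univ, true_and, le_refl, if_true,
    if_neg hlt] at h
  norm_num at h

end Matching

end ThreeByThree

/-- For the 3×3 market, no deterministic matching mechanism is simultaneously two-sided
strategy-proof, non-wasteful (always a perfect matching, since all agents find each
other acceptable), and anonymous. -/
theorem no_sp_nonwasteful_anonymous_3x3 :
    ¬ ∃ g : Profile 3 3 → Fin 3 → Fin 3 → ℝ,
      (∀ p, IsDetOutput (g p)) ∧ TwoSidedSP g ∧ Anonymous g ∧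
      (∀ p : Profile 3 3, (∀ s, ∑ c, g p s c = 1) ∧ (∀ c, ∑ s, g p s c = 1)) := by
  rintro ⟨g, hdet, ⟨hstu, hsch⟩, hanon, hperf⟩
  choose σ hσ using fun p => ThreeByThree.exists_perm (hdet p).1 (hperf p).1 (hperf p).2
  -- The outcome as a function of the school.
  have hσ' : ∀ p s c, g p s c = if (σ p).symm c = s then 1 else 0 := by
    intro p s c
    rw [hσ]
    exact if_congr ⟨fun h => by simp [← h], fun h => by simp [← h]⟩ rfl rfl
  have hS : ∀ (p : Profile 3 3) s q,
      p.1 s (σ p s) ≤ p.1 s (σ (Function.update p.1 s q, p.2) s) := by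
    intro p s q
    have h := hstu p s q (σ (Function.update p.1 s q, p.2) s)
    simp only [hσ] at h
    exact ThreeByThree.rank_le_of_sum_le _ _ _ h
  have hC : ∀ (p : Profile 3 3) c q,
      p.2 c ((σ p).symm c) ≤ p.2 c ((σ (p.1, Function.update p.2 c q)).symm c) := by
    intro p c q
    have h := hsch p c q ((σ (p.1, Function.update p.2 c q)).symm c)
    simp only [hσ'] at h
    exact ThreeByThree.rank_le_of_sum_le _ _ _ h
  have hA : ∀ p πS πC, σ (relabel πS πC p) = πC * σ p * πS⁻¹ := by
    intro p πS πC
    ext s : 1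
    have h := hanon p πS πC (πS⁻¹ s) (σ p (πS⁻¹ s))
    rw [hσ, hσ, if_pos rfl] at h
    by_contra hne
    rw [if_neg] at h
    · exact one_ne_zero h
    · simpa using hne
  refine ThreeByThree.not_admissible
    (fun P => ThreeByThree.S3.ofPerm (σ P.toProfile)) fun t => ?_
  cases t with
  | student P s q =>
    have h1 := hS P.toProfile s q.perm.symm
    -- The reverse deviation, from the new report back to the old one.
    have h2 := hS (P.setStu s q).toProfile s (P.stu s).perm.symm
    rw [← ThreeByThree.Market.toProfile_setStu] at h1 h2
    rw [ThreeByThree.Market.setStu_setStu] at h2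
    simp only [ThreeByThree.Step.ok, ThreeByThree.Step.source, ThreeByThree.Step.target,
      ThreeByThree.S3.perm_ofPerm, Bool.and_eq_true, decide_eq_true_eq]
    refine ⟨h1, ?_⟩
    simpa [ThreeByThree.Market.toProfile, ThreeByThree.Market.setStu,
      ThreeByThree.Market.stu_ofFun] using h2
  | school P c q =>
    have h1 := hC P.toProfile c q.perm.symm
    have h2 := hC (P.setSch c q).toProfile c (P.sch c).perm.symm
    rw [← ThreeByThree.Market.toProfile_setSch] at h1 h2
    rw [ThreeByThree.Market.setSch_setSch] at h2
    simp only [ThreeByThree.Step.ok, ThreeByThree.Step.source, ThreeByThree.Step.target,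
      ThreeByThree.S3.perm_ofPerm, Bool.and_eq_true, decide_eq_true_eq]
    refine ⟨h1, ?_⟩
    simpa [ThreeByThree.Market.toProfile, ThreeByThree.Market.setSch,
      ThreeByThree.Market.sch_ofFun] using h2
  | rename P x y =>
    simp only [ThreeByThree.Step.ok, ThreeByThree.Step.source, ThreeByThree.Step.target,
      ThreeByThree.S3.perm_ofPerm, decide_eq_true_eq]
    rw [ThreeByThree.Market.toProfile_ren, hA]
    rfl
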